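/- Let a > 0 with a ≠ 1, and let D be the 2n×2n diagonal matrix with block form diag(a·I_n, a⁻¹·I_n). Then a matrix R that is both symplectic and orthogonal (R ∈ Sp(2n,ℝ) ∩ O(2n)) satisfies RᵀDR = D if and only if there exists X ∈ O(n) such that R is the block-diagonal matrix [[X, 0], [0, X]]. In particular, the stabilizer of D in the orthogonal symplectic group is isomorphic to O(n). -/

import Mathlib

open Matrix

/-- `J` denotes the 2n×2n real matrix with block form [[0, I_n], [−I_n, 0]]. -/
noncomputable def J (n : ℕ) : Matrix (Fin n ⊕ Fin n) (Fin n ⊕ Fin n) ℝ :=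
  Matrix.fromBlocks 0 1 (-1) 0

/-- For `a > 0`, `a ≠ 1` and `D = diag(a·I_n, a⁻¹·I_n)`, an orthogonal symplectic
matrix `R` satisfies `Rᵀ D R = D` iff `R = diag(X, X)` for some orthogonal `X`;
thus the stabilizer of `D` in the orthogonal symplectic group is isomorphic to `O(n)`. -/
theorem stmt_2 (n : ℕ) (a : ℝ) (ha : 0 < a) (ha1 : a ≠ 1)
    (R : Matrix (Fin n ⊕ Fin n) (Fin n ⊕ Fin n) ℝ)
    (hRsymp : Rᵀ * J n * R = J n) (hRorth : Rᵀ * R = 1) :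
    Rᵀ * Matrix.diagonal (Sum.elim (fun _ : Fin n => a) (fun _ : Fin n => a⁻¹)) * R
        = Matrix.diagonal (Sum.elim (fun _ : Fin n => a) (fun _ : Fin n => a⁻¹)) ↔
      ∃ X : Matrix (Fin n) (Fin n) ℝ, Xᵀ * X = 1 ∧ R = Matrix.fromBlocks X 0 0 X := by
  have hR' : R * Rᵀ = 1 := mul_eq_one_comm.mp hRorth
  have key : ∀ M : Matrix (Fin n ⊕ Fin n) (Fin n ⊕ Fin n) ℝ, Rᵀ * M * R = M → M * R = R * M := by
    intro M h
    calc M * R = (R * Rᵀ) * M * R := by rw [hR', Matrix.one_mul]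
      _ = R * (Rᵀ * M * R) := by simp only [Matrix.mul_assoc]
      _ = R * M := by rw [h]
  have hne : a ≠ a⁻¹ := by
    intro h
    have h2 : a * a = 1 := by
      nth_rewrite 2 [h]
      exact mul_inv_cancel₀ ha.ne'
    apply ha1
    nlinarith
  constructor
  · intro h
    have hD := key _ h
    have hJ := key _ hRsymp
    obtain ⟨A, B, C, E, rfl⟩ : ∃ A B C E, R = Matrix.fromBlocks A B C E :=
      ⟨_, _, _, _, (Matrix.fromBlocks_toBlocks R).symm⟩
    have hB : B = 0 := by
      ext i j
      have := congrFun (congrFun hD (Sum.inl i)) (Sum.inr j)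
      simp only [Matrix.diagonal_mul, Matrix.mul_diagonal, Sum.elim_inl, Sum.elim_inr,
        Matrix.fromBlocks_apply₁₂] at this
      have h3 : (a - a⁻¹) * B i j = 0 := by linarith
      exact (mul_eq_zero.mp h3).resolve_left (sub_ne_zero.mpr hne)
    have hJ' : Matrix.fromBlocks C E (-A) (-B) = Matrix.fromBlocks (-B) A (-E) C := by
      simpa [_root_.J, Matrix.fromBlocks_multiply] using hJ
    obtain ⟨h1, h2, -, -⟩ := Matrix.fromBlocks_inj.mp hJ'
    subst hB
    rw [neg_zero] at h1
    subst h1 h2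
    refine ⟨E, ?_, rfl⟩
    rw [Matrix.fromBlocks_transpose, Matrix.fromBlocks_multiply, ← Matrix.fromBlocks_one] at hRorth
    simpa using (Matrix.fromBlocks_inj.mp hRorth).1
  · rintro ⟨X, hX, rfl⟩
    have hD : Matrix.diagonal (Sum.elim (fun _ : Fin n => a) (fun _ : Fin n => a⁻¹))
        * Matrix.fromBlocks X 0 0 X = Matrix.fromBlocks X 0 0 X *
        Matrix.diagonal (Sum.elim (fun _ : Fin n => a) (fun _ : Fin n => a⁻¹)) := by
      ext i j
      rw [Matrix.diagonal_mul, Matrix.mul_diagonal]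
      rcases i with i | i <;> rcases j with j | j <;> simp [mul_comm]
    rw [Matrix.mul_assoc, hD, ← Matrix.mul_assoc, hRorth, Matrix.one_mul]
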